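/- arXiv:1607.00714 — 2 statements merged into one kernel-verified Lean document; each statement's English description precedes it below -/
import Mathlib

section
/- For every cache configuration c ∈ C_n(m), the layered product-form distribution π_L satisfies the global balance equation of the layered-architecture cache-replacement chain: π_L(c)·(1 − Σ_{j∈c_h} p_j) = Σ_{k in list 0} Σ_{u∈c_1} π_L(c_{k→(1,u)})·p_u/m_1 + Σ_{i=1}^{h−1} Σ_{u∈c_i} Σ_{v∈c_{i+1}} π_L(c_{(i,u)↔(i+1,v)})·p_v/m_{i+1}. -/
/-!
Exchanging `u ∈ c i` with `v ∈ c (i + 1)` multiplies the layered weight by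
`(p v / p u) ^ i * (p u / p v) ^ (i + 1) = p u / p v`, so the weights are in detailed balance along
every edge between consecutive lists. The inflow into `c` through an exchange of `u` with one of the
`m (i + 1)` pages `v` is therefore `π c * p u / m (i + 1)`, and `π c * p u` after summing over `v`.
Here `u` ranges over all pages outside list `h`, the pages whose requests make the chain leave `c`.
-/

open Finset

/-- A cache configuration: lists are indexed by `Fin (h+1)`, index `0` being "list 0"
(the storage layer / pages in no cache list), indices `1,…,h` the cache lists.
Lists are pairwise disjoint, list `i ≠ 0` has `m i` pages, and all pages are covered. -/
def IsCacheConfig (n h : ℕ) (m : Fin (h+1) → ℕ) (c : Fin (h+1) → Finset (Fin n)) : Prop :=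
  (∀ i, i ≠ 0 → (c i).card = m i) ∧
  (∀ i j, i ≠ j → Disjoint (c i) (c j)) ∧
  Finset.univ.biUnion c = Finset.univ

open scoped Classical in
/-- The finite set `C_n(m)` of all cache configurations. -/
noncomputable def cacheConfigs (n h : ℕ) (m : Fin (h+1) → ℕ) :
    Finset (Fin (h+1) → Finset (Fin n)) :=
  Finset.univ.filter (IsCacheConfig n h m)

/-- Exchange a page of list `i` with a page of list `j`:
`swapPages c i j u v` moves `v` into list `i` (replacing `u`, which moves to list `j`,
replacing `v`).  For `i = 0` this is the replacement operation `c_{u→(j,v)}`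
moving page `u` of list 0 into list `j` in place of `v`. -/
def swapPages (n h : ℕ) (c : Fin (h+1) → Finset (Fin n)) (i j : Fin (h+1)) (u v : Fin n) :
    Fin (h+1) → Finset (Fin n) :=
  fun l => if l = i then insert v ((c i).erase u)
           else if l = j then insert u ((c j).erase v) else c l

/-- Unnormalized product-form weight `∏_i (∏_{j∈c_i} p_j)^{ht(i)}` (note `ht 0 = 0`). -/
noncomputable def configWeight (n h : ℕ) (p : Fin n → ℝ) (ht : Fin (h+1) → ℕ)
    (c : Fin (h+1) → Finset (Fin n)) : ℝ :=
  ∏ i, (∏ j ∈ c i, p j) ^ ht i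

/-- The product-form distribution `π(c) = weight(c)/Z`. -/
noncomputable def piDist (n h : ℕ) (m : Fin (h+1) → ℕ) (p : Fin n → ℝ) (ht : Fin (h+1) → ℕ)
    (c : Fin (h+1) → Finset (Fin n)) : ℝ :=
  configWeight n h p ht c / ∑ c' ∈ cacheConfigs n h m, configWeight n h p ht c'

/-- Flat height function: `ht_F(i) = i` for `i ≤ h_N`, `ht_F(i) = i − h_N` for `i > h_N`. -/
def htFlat (h hN : ℕ) : Fin (h+1) → ℕ :=
  fun i => if i.val ≤ hN then i.val else i.val - hN

/-- Layered height function: `ht_L(i) = i`. -/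
def htLayer (h : ℕ) : Fin (h+1) → ℕ := fun i => i.val

variable {n h : ℕ}

section SwapPages

variable (c : Fin (h + 1) → Finset (Fin n)) {i j : Fin (h + 1)} (u v : Fin n)

lemma swapPages_apply_left : swapPages n h c i j u v i = insert v ((c i).erase u) :=
  if_pos rfl

lemma swapPages_apply_right (hij : i ≠ j) :
    swapPages n h c i j u v j = insert u ((c j).erase v) := by
  rw [swapPages, if_neg hij.symm, if_pos rfl]

lemma swapPages_apply_of_ne {l : Fin (h + 1)} (hli : l ≠ i) (hlj : l ≠ j) :
    swapPages n h c i j u v l = c l := by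
  rw [swapPages, if_neg hli, if_neg hlj]

end SwapPages

section DetailedBalance

variable (p : Fin n → ℝ) (ht : Fin (h + 1) → ℕ) (c : Fin (h + 1) → Finset (Fin n))
  {i j : Fin (h + 1)}

lemma configWeight_eq_mul_prod_compl_pair (hij : i ≠ j) :
    configWeight n h p ht c =
      (∏ k ∈ c i, p k) ^ ht i * (∏ k ∈ c j, p k) ^ ht j *
        ∏ l ∈ {i, j}ᶜ, (∏ k ∈ c l, p k) ^ ht l := by
  rw [configWeight, ← prod_mul_prod_compl {i, j}, prod_pair hij]

variable {c}

lemma configWeight_swapPages_mul {u v : Fin n} (hdisj : Disjoint (c i) (c j))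
    (hht : ht j = ht i + 1) (hu : u ∈ c i) (hv : v ∈ c j) :
    configWeight n h p ht (swapPages n h c i j u v) * p v = configWeight n h p ht c * p u := by
  have hij : i ≠ j := by
    rintro rfl
    omega
  have hvi : v ∉ (c i).erase u := fun hmem => disjoint_right.mp hdisj hv (mem_of_mem_erase hmem)
  have huj : u ∉ (c j).erase v := fun hmem => disjoint_left.mp hdisj hu (mem_of_mem_erase hmem)
  have hrest : ∏ l ∈ {i, j}ᶜ, (∏ k ∈ swapPages n h c i j u v l, p k) ^ ht l =
      ∏ l ∈ {i, j}ᶜ, (∏ k ∈ c l, p k) ^ ht l := by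
    refine prod_congr rfl fun l hl => ?_
    simp only [mem_compl, mem_insert, mem_singleton, not_or] at hl
    rw [swapPages_apply_of_ne c u v hl.1 hl.2]
  rw [configWeight_eq_mul_prod_compl_pair p ht _ hij,
    configWeight_eq_mul_prod_compl_pair p ht c hij, hrest, swapPages_apply_left,
    swapPages_apply_right c u v hij, prod_insert hvi, prod_insert huj,
    ← mul_prod_erase (c i) p hu, ← mul_prod_erase (c j) p hv, hht]
  ring

variable {p}

lemma sum_swapPages_eq_of_detailed_balance {π : (Fin (h + 1) → Finset (Fin n)) → ℝ}
    (hπ : ∀ u ∈ c i, ∀ v ∈ c j, π (swapPages n h c i j u v) * p v = π c * p u)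
    (hcj : (c j).Nonempty) :
    ∑ u ∈ c i, ∑ v ∈ c j, π (swapPages n h c i j u v) * p v / (#(c j) : ℝ) =
      π c * ∑ u ∈ c i, p u := by
  have hcard : (#(c j) : ℝ) ≠ 0 := Nat.cast_ne_zero.mpr hcj.card_ne_zero
  rw [mul_sum]
  refine sum_congr rfl fun u hu => ?_
  calc
    ∑ v ∈ c j, π (swapPages n h c i j u v) * p v / (#(c j) : ℝ)
      = ∑ _v ∈ c j, π c * p u / (#(c j) : ℝ) :=
        sum_congr rfl fun v hv => by rw [hπ u hu v hv]
    _ = π c * p u := by rw [sum_const, nsmul_eq_mul, mul_div_cancel₀ _ hcard]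

end DetailedBalance

section Partition

variable {m : Fin (h + 1) → ℕ} {c : Fin (h + 1) → Finset (Fin n)}

lemma IsCacheConfig.sum_sum {M : Type*} [AddCommMonoid M] (hc : IsCacheConfig n h m c)
    (f : Fin n → M) : ∑ i, ∑ k ∈ c i, f k = ∑ k, f k := by
  rw [← hc.2.2, sum_biUnion fun i _ j _ hij => hc.2.1 i j hij]

lemma IsCacheConfig.sum_sum_castSucc {M : Type*} [AddCommGroup M] (hc : IsCacheConfig n h m c)
    (f : Fin n → M) :
    ∑ i : Fin h, ∑ k ∈ c i.castSucc, f k = ∑ k, f k - ∑ k ∈ c (Fin.last h), f k := by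
  rw [← hc.sum_sum f, Fin.sum_univ_castSucc, add_sub_cancel_right]

end Partition

lemma sum_castSucc_succ_eq_add_sum_filter {M : Type*} [AddCommMonoid M] (hh : 0 < h)
    (f : Fin (h + 1) → Fin (h + 1) → M) :
    ∑ i : Fin h, f i.castSucc i.succ =
      f 0 ⟨1, by omega⟩ + ∑ i : Fin (h + 1) with 1 ≤ i.val ∧ i.val < h, f i (i + 1) := by
  obtain ⟨k, rfl⟩ := Nat.exists_eq_add_one.mpr hh
  have add_one_eq_succ (i : Fin k) : i.castSucc.succ + 1 = i.succ.succ := by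
    rw [Fin.succ_castSucc, Fin.coeSucc_eq_succ]
  rw [sum_filter, Fin.sum_univ_castSucc (n := k + 1), Fin.sum_univ_succ, Fin.sum_univ_succ]
  simp [add_one_eq_succ]

/-- Working up to a scalar `a` avoids the normalizing sum, which may vanish for a general `p`. -/
theorem layered_global_balance_general (p : Fin n → ℝ) (m : Fin (h + 1) → ℕ)
    (hm : ∀ i, i ≠ 0 → 0 < m i) {π : (Fin (h + 1) → Finset (Fin n)) → ℝ} {a : ℝ}
    (hπ : ∀ d, π d = a * configWeight n h p (htLayer h) d)
    {c : Fin (h + 1) → Finset (Fin n)} (hc : IsCacheConfig n h m c) :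
    π c * (∑ k, p k - ∑ k ∈ c (Fin.last h), p k) =
      ∑ i : Fin h, ∑ u ∈ c i.castSucc, ∑ v ∈ c i.succ,
        π (swapPages n h c i.castSucc i.succ u v) * p v / (m i.succ : ℝ) := by
  have hbalance (i : Fin h) : ∀ u ∈ c i.castSucc, ∀ v ∈ c i.succ,
      π (swapPages n h c i.castSucc i.succ u v) * p v = π c * p u := by
    intro u hu v hv
    have hdisj := hc.2.1 _ _ i.castSucc_lt_succ.ne
    rw [hπ, hπ, mul_assoc, mul_assoc, configWeight_swapPages_mul p _ hdisj rfl hu hv]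
  rw [← hc.sum_sum_castSucc, mul_sum]
  refine sum_congr rfl fun i _ => ?_
  have hcard : #(c i.succ) = m i.succ := hc.1 _ i.succ_ne_zero
  have hne : (c i.succ).Nonempty := card_pos.mp (hcard ▸ hm _ i.succ_ne_zero)
  rw [← hcard, sum_swapPages_eq_of_detailed_balance (hbalance i) hne]

/-- the layered product-form distribution satisfies the global balance equation
of the layered-architecture cache-replacement chain. -/
theorem layered_global_balance
    (n h : ℕ) (hn : 2 ≤ n) (hh : 2 ≤ h)
    (p : Fin n → ℝ) (hp : ∀ k, 0 < p k) (hpsum : ∑ k, p k = 1)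
    (m : Fin (h+1) → ℕ) (hm : ∀ i, i ≠ 0 → 0 < m i)
    (hmn : ∑ i ∈ Finset.univ.filter (fun i : Fin (h+1) => i ≠ 0), m i < n)
    (c : Fin (h+1) → Finset (Fin n)) (hc : c ∈ cacheConfigs n h m) :
    piDist n h m p (htLayer h) c * (1 - ∑ j ∈ c ⟨h, by omega⟩, p j) =
      (∑ k ∈ c 0, ∑ u ∈ c ⟨1, by omega⟩,
          piDist n h m p (htLayer h) (swapPages n h c 0 ⟨1, by omega⟩ k u) * p u
            / (m ⟨1, by omega⟩ : ℝ))
      + ∑ i ∈ Finset.univ.filter (fun i : Fin (h+1) => 1 ≤ i.val ∧ i.val < h),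
          ∑ u ∈ c i, ∑ v ∈ c (i + 1),
            piDist n h m p (htLayer h) (swapPages n h c i (i + 1) u v) * p v
              / (m (i + 1) : ℝ) := by
  have hcfg : IsCacheConfig n h m c := by simpa [cacheConfigs] using hc
  rw [← hpsum]
  exact (layered_global_balance_general p m hm (fun _ => div_eq_inv_mul _ _) hcfg).trans
    (sum_castSucc_succ_eq_add_sum_filter (by omega) fun i j => ∑ u ∈ c i, ∑ v ∈ c j,
      piDist n h m p (htLayer h) (swapPages n h c i j u v) * p v / (m j : ℝ))
end

section
/- Let π: C_n(m) → (0,∞) satisfy the flat exchange conditions (*F). Then for all configurations c, c′ ∈ C_n(m): π(c′)/π(c) = ∏_{k=1}^n p_k^{I_k(c′) − I_k(c)}, where I_k(c) = ht_F(i) if page k lies in list i of c (1 ≤ i ≤ h) and I_k(c) = 0 if page k is in list 0 of c. -/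
open Finset

/-- `I_k(c)`: the height of the list of `c` containing page `k` (0 if `k` is in list 0).
Since the lists of a configuration are pairwise disjoint, the sum has at most one
nonzero term. -/
def heightOf (n h : ℕ) (ht : Fin (h+1) → ℕ) (c : Fin (h+1) → Finset (Fin n)) (k : Fin n) : ℕ :=
  ∑ i, if k ∈ c i then ht i else 0

/-!
Listing the pages of a configuration amounts to a function `f : Fin n → Fin (h + 1)` sending each
page to its list, and exchanging the pages `u` and `v` replaces `f` by `f ∘ swap u v`. The claim is
that `V f = π f / ∏ k, p k ^ ht (f k)` takes the same value at all configurations; the exchange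
conditions say that `V` is unchanged by exchanges between lists that are adjacent in the path
`hN - ⋯ - 1 - 0 - (hN+1) - ⋯ - h`.

Fix one configuration `f`. All others are of the form `f ∘ σ`, and the permutations `τ` with
`V (f ∘ (τ * σ)) = V (f ∘ σ)` for all `σ` form a group. It contains `swap x y` when `x` and `y` lie
in the same list of `f` or in adjacent ones. In any group of permutations, "`swap x y` belongs to
the group" is an equivalence relation in `x` and `y`. Since the path is connected and no list is
empty, the group contains all transpositions, so it is the full symmetric group.
-/

section Permutations

open Equiv Relation

variable {α β γ : Type*}

/-- The group of left translations of `G` under which `W` is invariant. It is used for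
`W σ = V (f ∘ σ)` on a symmetric group. -/
def leftInvariance {G : Type*} [Group G] (W : G → γ) : Subgroup G where
  carrier := {τ | ∀ σ, W (τ * σ) = W σ}
  one_mem' σ := by rw [one_mul]
  mul_mem' hτ hτ' σ := by rw [mul_assoc, hτ, hτ']
  inv_mem' {τ} hτ σ := by rw [← hτ, mul_inv_cancel_left]

lemma swap_mem_of_eqvGen [DecidableEq α] {G : Subgroup (Perm α)} {f : α → β} (hf : f.Surjective)
    {r : β → β → Prop} (hfib : ∀ x y, f x = f y → swap x y ∈ G)
    (hr : ∀ x y, r (f x) (f y) → swap x y ∈ G) {a b : β} (hab : EqvGen r a b) :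
    ∀ x y, f x = a → f y = b → swap x y ∈ G := by
  induction hab with
  | rel a b hab => rintro x y rfl rfl; exact hr x y hab
  | refl a => exact fun x y hx hy ↦ hfib x y (hx.trans hy.symm)
  | symm a b _ ih => exact fun x y hx hy ↦ swap_comm y x ▸ ih y x hy hx
  | trans a b d _ _ ihab ihbd =>
    intro x z hx hz
    obtain ⟨y, hy⟩ := hf b
    exact SubmonoidClass.swap_mem_trans G (ihab x y hx hy) (ihbd y z hy hz)

lemma subgroup_eq_top_of_swap_mem [Finite α] [DecidableEq α] {G : Subgroup (Perm α)}
    (hG : ∀ x y, swap x y ∈ G) : G = ⊤ := by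
  rw [eq_top_iff, ← Perm.closure_isSwap, Subgroup.closure_le]
  rintro _ ⟨x, y, -, rfl⟩
  exact hG x y

lemma comp_perm_eq_of_comp_swap_eq [Finite α] [DecidableEq α] {f : α → β} (hf : f.Surjective)
    {r : β → β → Prop} (hconn : ∀ a b, EqvGen r a b) {V : (α → β) → γ}
    (hV : ∀ (σ : Perm α) (u v : α), r (f (σ u)) (f (σ v)) → V (f ∘ σ ∘ swap u v) = V (f ∘ σ))
    (σ : Perm α) : V (f ∘ σ) = V f := by
  let G := leftInvariance fun σ : Perm α ↦ V (f ∘ σ)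
  have hfib (x y : α) (hxy : f x = f y) : swap x y ∈ G := fun σ ↦
    congrArg V (funext fun k ↦ apply_swap_eq_self hxy (σ k))
  have hr (x y : α) (hxy : r (f x) (f y)) : swap x y ∈ G := fun σ ↦ by
    have := hV σ (σ⁻¹ x) (σ⁻¹ y) (by simpa only [Perm.coe_inv, apply_symm_apply] using hxy)
    rwa [swap_mul_eq_mul_swap]
  have hG : G = ⊤ := subgroup_eq_top_of_swap_mem fun x y ↦
    swap_mem_of_eqvGen hf hfib hr (hconn (f x) (f y)) x y rfl rfl
  have hσ : σ ∈ G := hG ▸ Subgroup.mem_top σ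
  exact hσ 1

lemma exists_perm_of_card_fiber_eq [Fintype α] [DecidableEq β] {f g : α → β}
    (hfg : ∀ b, #{k | f k = b} = #{k | g k = b}) : ∃ σ : Perm α, g = f ∘ σ := by
  have e (b : β) : {k // g k = b} ≃ {k // f k = b} :=
    Fintype.equivOfCardEq (by rw [Fintype.card_subtype, Fintype.card_subtype, hfg])
  exact ⟨ofFiberEquiv e, funext fun k ↦ (ofFiberEquiv_map e k).symm⟩

end Permutations

section PageWeight

variable {α β M : Type*} [Fintype α]

/-- The product-form weight of the assignment `f` of pages to lists: `configWeight` written as a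
product over pages, with values in any commutative monoid. -/
def pageWeight [CommMonoid M] (p : α → M) (ht : β → ℕ) (f : α → β) : M :=
  ∏ k, p k ^ ht (f k)

lemma pageWeight_comp_swap [DecidableEq α] [CommMonoid M] (p : α → M) {ht : β → ℕ} {f : α → β}
    {u v : α} (huv : ht (f v) = ht (f u) + 1) :
    pageWeight p ht (f ∘ Equiv.swap u v) * p v = pageWeight p ht f * p u := by
  have mul_eq (g : α → β) (w : α) :
      pageWeight p ht g * p w = ∏ k, p k ^ (ht (g k) + if w = k then 1 else 0) := by
    simp only [pageWeight, pow_add, prod_mul_distrib, prod_pow_boole, mem_univ, if_true]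
  rw [mul_eq, mul_eq]
  refine prod_congr rfl fun k _ ↦ congrArg (p k ^ ·) ?_
  simp only [Function.comp_apply, Equiv.swap_apply_def]
  grind

lemma div_pageWeight_comp_swap [DecidableEq α] [CommGroupWithZero M] {p : α → M}
    (hp : ∀ k, p k ≠ 0) {ht : β → ℕ} {f : α → β} {u v : α} (huv : ht (f v) = ht (f u) + 1)
    {x y : M} (hxy : x * p v = y * p u) :
    x / pageWeight p ht (f ∘ Equiv.swap u v) = y / pageWeight p ht f := by
  rw [← mul_div_mul_right _ _ (hp v), hxy, pageWeight_comp_swap p huv, mul_div_mul_right _ _ (hp u)]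

lemma pageWeight_ne_zero [CommGroupWithZero M] {p : α → M} (hp : ∀ k, p k ≠ 0) (ht : β → ℕ)
    (f : α → β) : pageWeight p ht f ≠ 0 :=
  prod_ne_zero_iff.2 fun k _ ↦ pow_ne_zero _ (hp k)

lemma prod_zpow_sub_eq_pageWeight_div [CommGroupWithZero M] {p : α → M} (hp : ∀ k, p k ≠ 0)
    (ht : β → ℕ) (f g : α → β) :
    ∏ k, p k ^ ((ht (g k) : ℤ) - ht (f k)) = pageWeight p ht g / pageWeight p ht f := by
  simp only [pageWeight, ← prod_div_distrib, zpow_sub₀ (hp _), zpow_natCast]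

end PageWeight

section Configurations

variable {n h : ℕ} {m : Fin (h + 1) → ℕ} {c c' : Fin (h + 1) → Finset (Fin n)}

lemma mem_cacheConfigs : c ∈ cacheConfigs n h m ↔ IsCacheConfig n h m c := by
  simp only [cacheConfigs, mem_filter, mem_univ, true_and]

namespace IsCacheConfig

lemma card_zero_add_sum (hc : IsCacheConfig n h m c) :
    #(c 0) + ∑ i with i ≠ 0, m i = n := by
  obtain ⟨hcard, hdisj, hcover⟩ := hc
  calc #(c 0) + ∑ i with i ≠ 0, m i = #(c 0) + ∑ i with i ≠ 0, #(c i) := by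
        rw [sum_congr rfl fun i hi ↦ hcard i (mem_filter.1 hi).2]
    _ = ∑ i, #(c i) := by rw [filter_ne', add_sum_erase _ (fun i ↦ #(c i)) (mem_univ 0)]
    _ = #(univ.biUnion c) := (card_biUnion fun i _ j _ hij ↦ hdisj i j hij).symm
    _ = n := by rw [hcover, card_univ, Fintype.card_fin]

lemma card_eq (hc : IsCacheConfig n h m c) (hc' : IsCacheConfig n h m c') (i : Fin (h + 1)) :
    #(c i) = #(c' i) := by
  obtain rfl | hi := eq_or_ne i 0
  · exact Nat.add_right_cancel (hc.card_zero_add_sum.trans hc'.card_zero_add_sum.symm)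
  · rw [hc.1 i hi, hc'.1 i hi]

lemma nonempty (hc : IsCacheConfig n h m c) (hm : ∀ i, i ≠ 0 → 0 < m i)
    (hmn : ∑ i with i ≠ 0, m i < n) (i : Fin (h + 1)) : (c i).Nonempty := by
  rw [← card_pos]
  obtain rfl | hi := eq_or_ne i 0
  · have := hc.card_zero_add_sum
    omega
  · exact hc.1 i hi ▸ hm i hi

end IsCacheConfig

/-- The tuple of lists of the assignment `f` of pages to lists. Every cache configuration is of this
form, see `IsCacheConfig.exists_eq_listsOf`. -/
def listsOf (f : Fin n → Fin (h + 1)) (i : Fin (h + 1)) : Finset (Fin n) := {k | f k = i}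

variable {f : Fin n → Fin (h + 1)}

lemma mem_listsOf {i : Fin (h + 1)} {k : Fin n} : k ∈ listsOf f i ↔ f k = i := by
  simp only [listsOf, mem_filter, mem_univ, true_and]

lemma isCacheConfig_listsOf :
    IsCacheConfig n h m (listsOf f) ↔ ∀ i, i ≠ 0 → #(listsOf f i) = m i := by
  refine and_iff_left ⟨fun i j hij ↦ disjoint_left.2 fun k hi hj ↦ hij ?_, ?_⟩
  · exact (mem_listsOf.1 hi).symm.trans (mem_listsOf.1 hj)
  · exact eq_univ_of_forall fun k ↦ mem_biUnion.2 ⟨f k, mem_univ _, mem_listsOf.2 rfl⟩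

lemma IsCacheConfig.exists_eq_listsOf (hc : IsCacheConfig n h m c) : ∃ f, c = listsOf f := by
  obtain ⟨-, hdisj, hcover⟩ := hc
  have hmem (k : Fin n) : ∃ i, k ∈ c i := by
    simpa only [mem_biUnion, mem_univ, true_and] using hcover.ge (mem_univ k)
  choose f hf using hmem
  refine ⟨f, funext fun i ↦ Finset.ext fun k ↦ Iff.trans ⟨fun hk ↦ ?_, ?_⟩ mem_listsOf.symm⟩
  · by_contra hne
    exact disjoint_left.1 (hdisj _ _ hne) (hf k) hk
  · rintro rfl
    exact hf k

lemma IsCacheConfig.listsOf_comp_perm (hf : IsCacheConfig n h m (listsOf f))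
    (σ : Equiv.Perm (Fin n)) : IsCacheConfig n h m (listsOf (f ∘ σ)) :=
  isCacheConfig_listsOf.2 fun i hi ↦ (card_equiv σ fun _ ↦ by
    rw [mem_listsOf, mem_listsOf, Function.comp_apply]).trans (hf.1 i hi)

lemma IsCacheConfig.exists_eq_listsOf_comp_perm (hf : IsCacheConfig n h m (listsOf f))
    (hc : IsCacheConfig n h m c) : ∃ σ : Equiv.Perm (Fin n), c = listsOf (f ∘ σ) := by
  obtain ⟨g, rfl⟩ := hc.exists_eq_listsOf
  obtain ⟨σ, rfl⟩ := exists_perm_of_card_fiber_eq (hf.card_eq hc)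
  exact ⟨σ, rfl⟩

lemma IsCacheConfig.surjective_of_listsOf (hf : IsCacheConfig n h m (listsOf f))
    (hm : ∀ i, i ≠ 0 → 0 < m i) (hmn : ∑ i with i ≠ 0, m i < n) : f.Surjective := fun i ↦
  (hf.nonempty hm hmn i).imp fun _ ↦ mem_listsOf.1

lemma heightOf_listsOf (ht : Fin (h + 1) → ℕ) (f : Fin n → Fin (h + 1)) (k : Fin n) :
    heightOf n h ht (listsOf f) k = ht (f k) := by
  simp only [heightOf, mem_listsOf, sum_ite_eq, mem_univ, if_true]

lemma swapPages_listsOf {u v : Fin n} (huv : f u ≠ f v) :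
    swapPages n h (listsOf f) (f u) (f v) u v = listsOf (f ∘ Equiv.swap u v) := by
  ext l k
  simp only [swapPages, mem_listsOf, Function.comp_apply, Equiv.swap_apply_def]
  split_ifs <;> simp only [mem_insert, mem_erase, mem_listsOf] <;> grind

theorem exchange_ratio_of_connected {K : Type*} [CommGroupWithZero K]
    (hm : ∀ i, i ≠ 0 → 0 < m i) (hmn : ∑ i with i ≠ 0, m i < n)
    {p : Fin n → K} (hp : ∀ k, p k ≠ 0) {ht : Fin (h + 1) → ℕ}
    {r : Fin (h + 1) → Fin (h + 1) → Prop} (hconn : ∀ i j, Relation.EqvGen r i j)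
    (hht : ∀ i j, r i j → ht j = ht i + 1)
    {π : (Fin (h + 1) → Finset (Fin n)) → K}
    (hπ : ∀ c, IsCacheConfig n h m c → ∀ i j, r i j → ∀ u ∈ c i, ∀ v ∈ c j,
      π (swapPages n h c i j u v) * p v = π c * p u)
    (hc : IsCacheConfig n h m c) (hc' : IsCacheConfig n h m c') (hπc : π c ≠ 0) :
    π c' / π c = ∏ k, p k ^ ((heightOf n h ht c' k : ℤ) - (heightOf n h ht c k : ℤ)) := by
  obtain ⟨f, rfl⟩ := hc.exists_eq_listsOf
  obtain ⟨σ, rfl⟩ := hc.exists_eq_listsOf_comp_perm hc'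
  let V (g : Fin n → Fin (h + 1)) : K := π (listsOf g) / pageWeight p ht g
  have hV_swap {g} (hg : IsCacheConfig n h m (listsOf g)) (u v) (huv : r (g u) (g v)) :
      V (g ∘ Equiv.swap u v) = V g := by
    have hstep : ht (g v) = ht (g u) + 1 := hht _ _ huv
    have hne : g u ≠ g v := fun heq ↦ by rw [heq] at hstep; omega
    have hexch := hπ _ hg _ _ huv u (mem_listsOf.2 rfl) v (mem_listsOf.2 rfl)
    rw [swapPages_listsOf hne] at hexch
    exact div_pageWeight_comp_swap hp hstep hexch
  have hV : V (f ∘ σ) = V f :=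
    comp_perm_eq_of_comp_swap_eq (hc.surjective_of_listsOf hm hmn) hconn
      (fun τ ↦ hV_swap (hc.listsOf_comp_perm τ)) σ
  simp only [heightOf_listsOf, prod_zpow_sub_eq_pageWeight_div hp]
  exact (div_eq_div_iff_div_eq_div' (pageWeight_ne_zero hp ht _) hπc).1 hV

end Configurations

section Flat

variable {h hN : ℕ}

/-- The pairs of lists whose pages are exchanged in the conditions (*F), lower list first: the
constructors `succ`, `zero_one` and `zero_succ` are the conditions (1), (2) and (3). -/
inductive FlatAdj (hNh : hN < h) : Fin (h + 1) → Fin (h + 1) → Prop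
  | succ (i : Fin (h + 1)) (hi : 1 ≤ i.val) (hih : i.val < h) (hiN : i.val ≠ hN) :
    FlatAdj hNh i (i + 1)
  | zero_one : FlatAdj hNh 0 ⟨1, by omega⟩
  | zero_succ : FlatAdj hNh 0 ⟨hN + 1, by omega⟩

lemma htFlat_of_flatAdj {hNh : hN < h} {i j : Fin (h + 1)} (hij : FlatAdj hNh i j) :
    htFlat h hN j = htFlat h hN i + 1 := by
  cases hij with
  | succ _ _ hih _ =>
    rw [htFlat, htFlat, Fin.val_add_one_of_lt (Fin.lt_def.2 hih)]
    split_ifs <;> omega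
  | zero_one | zero_succ =>
    simp only [htFlat, Fin.val_zero, zero_le, if_true]
    split_ifs <;> omega

lemma eqvGen_flatAdj_zero (hNh : hN < h) (i : ℕ) (hi : i < h + 1) :
    Relation.EqvGen (FlatAdj hNh) 0 ⟨i, hi⟩ := by
  induction i with
  | zero => exact .refl _
  | succ i ih =>
    obtain rfl | hi0 := eq_or_ne i 0
    · exact .rel _ _ .zero_one
    obtain rfl | hiN := eq_or_ne i hN
    · exact .rel _ _ .zero_succ
    have hih : i < h := by omega
    have hsucc : (⟨i, by omega⟩ + 1 : Fin (h + 1)) = ⟨i + 1, hi⟩ :=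
      Fin.ext (Fin.val_add_one_of_lt (Fin.lt_def.2 hih))
    have hadj := FlatAdj.succ (hNh := hNh) ⟨i, by omega⟩ (Nat.one_le_iff_ne_zero.2 hi0) hih hiN
    exact .trans _ _ _ (ih _) (.rel _ _ (hsucc ▸ hadj))

lemma eqvGen_flatAdj (hNh : hN < h) (i j : Fin (h + 1)) : Relation.EqvGen (FlatAdj hNh) i j :=
  .trans _ _ _ (.symm _ _ (eqvGen_flatAdj_zero hNh i i.2)) (eqvGen_flatAdj_zero hNh j j.2)

theorem flat_exchange_ratio_general {K : Type*} [CommGroupWithZero K] {n : ℕ} (hNh : hN < h)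
    (p : Fin n → K) (hp : ∀ k, p k ≠ 0)
    (m : Fin (h + 1) → ℕ) (hm : ∀ i, i ≠ 0 → 0 < m i) (hmn : ∑ i with i ≠ 0, m i < n)
    (π : (Fin (h + 1) → Finset (Fin n)) → K)
    (hstar : ∀ c ∈ cacheConfigs n h m,
      (∀ i : Fin (h + 1), 1 ≤ i.val → i.val < h → i.val ≠ hN →
        ∀ u ∈ c i, ∀ v ∈ c (i + 1),
          π (swapPages n h c i (i + 1) u v) * p v = π c * p u) ∧
      (∀ k ∈ c 0, ∀ u ∈ c ⟨1, by omega⟩,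
        π (swapPages n h c 0 ⟨1, by omega⟩ k u) * p u = π c * p k) ∧
      (∀ k ∈ c 0, ∀ u ∈ c ⟨hN + 1, by omega⟩,
        π (swapPages n h c 0 ⟨hN + 1, by omega⟩ k u) * p u = π c * p k))
    {c c' : Fin (h + 1) → Finset (Fin n)} (hc : c ∈ cacheConfigs n h m)
    (hc' : c' ∈ cacheConfigs n h m) (hπ : π c ≠ 0) :
    π c' / π c =
      ∏ k, p k ^ ((heightOf n h (htFlat h hN) c' k : ℤ) -
        (heightOf n h (htFlat h hN) c k : ℤ)) := by
  refine exchange_ratio_of_connected hm hmn hp (eqvGen_flatAdj hNh)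
    (fun _ _ ↦ htFlat_of_flatAdj) ?_ (mem_cacheConfigs.1 hc) (mem_cacheConfigs.1 hc') hπ
  intro c hc
  obtain ⟨hsucc, hone, hN_succ⟩ := hstar c (mem_cacheConfigs.2 hc)
  rintro _ _ (⟨_, hi, hih, hiN⟩ | _ | _)
  exacts [hsucc _ hi hih hiN, hone, hN_succ]

end Flat

/-- if `π` satisfies the flat exchange conditions (*F), then for all
configurations `c, c'`, `π(c')/π(c) = ∏_k p_k^{I_k(c') − I_k(c)}`. -/
theorem flat_exchange_ratio
    (n h hN : ℕ) (hn : 2 ≤ n) (hh : 2 ≤ h) (hN1 : 1 ≤ hN) (hNh : hN < h)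
    (p : Fin n → ℝ) (hp : ∀ k, 0 < p k) (hpsum : ∑ k, p k = 1)
    (m : Fin (h+1) → ℕ) (hm : ∀ i, i ≠ 0 → 0 < m i)
    (hmn : ∑ i ∈ Finset.univ.filter (fun i : Fin (h+1) => i ≠ 0), m i < n)
    (π : (Fin (h+1) → Finset (Fin n)) → ℝ)
    (hπpos : ∀ c ∈ cacheConfigs n h m, 0 < π c)
    (hstar : ∀ c ∈ cacheConfigs n h m,
      (∀ i : Fin (h+1), 1 ≤ i.val → i.val < h → i.val ≠ hN →
        ∀ u ∈ c i, ∀ v ∈ c (i + 1),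
          π (swapPages n h c i (i + 1) u v) * p v = π c * p u) ∧
      (∀ k ∈ c 0, ∀ u ∈ c ⟨1, by omega⟩,
        π (swapPages n h c 0 ⟨1, by omega⟩ k u) * p u = π c * p k) ∧
      (∀ k ∈ c 0, ∀ u ∈ c ⟨hN + 1, by omega⟩,
        π (swapPages n h c 0 ⟨hN + 1, by omega⟩ k u) * p u = π c * p k)) :
    ∀ c ∈ cacheConfigs n h m, ∀ c' ∈ cacheConfigs n h m,
      π c' / π c =
        ∏ k, p k ^ ((heightOf n h (htFlat h hN) c' k : ℤ) -
          (heightOf n h (htFlat h hN) c k : ℤ)) :=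
  fun _ hc _ hc' ↦
    flat_exchange_ratio_general hNh p (fun k ↦ (hp k).ne') m hm hmn π hstar hc hc' (hπpos _ hc).ne'
end
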